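/- Let m ≥ 1, let ρ_0, …, ρ_{m−1} be qubit states with m×3 Bloch matrix S, let Q := S Sᵀ, and let l be the dimension of the ℝ-linear span of {ρ_0, …, ρ_{m−1}} inside the real vector space of Hermitian 2×2 complex matrices. Then the rank of Q equals l − 1 if the identity matrix I lies in that span, and equals l otherwise. -/

import Mathlib

open Matrix Finset
open scoped ComplexOrder

/-- The Pauli matrices σ₁, σ₂, σ₃. -/
noncomputable def pauli : Fin 3 → Matrix (Fin 2) (Fin 2) ℂ :=
  ![!![0, 1; 1, 0], !![0, -Complex.I; Complex.I, 0], !![1, 0; 0, -1]]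

/-!
Taking Bloch vectors is a real-linear map on `2 × 2` complex matrices. Its images of the `ρ x` are
the rows of `S`, so `rank (S Sᵀ) = rank S` is the dimension of the image of `span {ρ x}`. By the
Pauli expansion of a matrix, the Hermitian matrices killed by this map are exactly the real
multiples of the identity, so the dimension drops by one if the identity lies in the span, and is
preserved otherwise.
-/

section LinearAlgebra

open Module LinearMap

variable {K V W : Type*} [DivisionRing K] [AddCommGroup V] [Module K V] [AddCommGroup W]
  [Module K W]

theorem finrank_map_add_finrank_ker_inf (f : V →ₗ[K] W) (p : Submodule K V)
    [FiniteDimensional K p] :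
    finrank K (p.map f) + finrank K ↥(ker f ⊓ p) = finrank K p := by
  have hker : finrank K (ker (f.domRestrict p)) = finrank K ↥(ker f ⊓ p) := by
    rw [ker_domRestrict, inf_comm, ← Submodule.map_comap_subtype]
    exact (Submodule.finrank_map_subtype_eq p _).symm
  rw [← range_domRestrict, ← hker, finrank_range_add_finrank_ker]

theorem finrank_map_add_one_of_mem {f : V →ₗ[K] W} {p : Submodule K V} [FiniteDimensional K p]
    {v : V} (hker : ker f ⊓ p = (K ∙ v) ⊓ p) (hv0 : v ≠ 0) (hv : v ∈ p) :
    finrank K (p.map f) + 1 = finrank K p := by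
  have hspan : ker f ⊓ p = K ∙ v :=
    hker.trans (inf_eq_left.2 ((Submodule.span_singleton_le_iff_mem v p).2 hv))
  rw [← finrank_map_add_finrank_ker_inf f p, hspan, finrank_span_singleton hv0]

theorem finrank_map_of_notMem {f : V →ₗ[K] W} {p : Submodule K V} {v : V}
    (hker : ker f ⊓ p = (K ∙ v) ⊓ p) (hv : v ∉ p) :
    finrank K (p.map f) = finrank K p := by
  have hinj : Function.Injective (f.domRestrict p) := by
    rw [injective_domRestrict_iff, disjoint_comm, disjoint_iff, hker, ← disjoint_iff]
    exact (Submodule.disjoint_span_singleton_of_notMem hv).symm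
  rw [← range_domRestrict, finrank_range_of_inj hinj]

theorem rank_of_linearMap_apply {F E ι κ : Type*} [Field F] [AddCommGroup E] [Module F E]
    [Finite ι] [Fintype κ] (f : E →ₗ[F] κ → F) (v : ι → E) :
    (Matrix.of fun i ↦ f (v i)).rank = finrank F ((Submodule.span F (Set.range v)).map f) := by
  rw [Matrix.rank_eq_finrank_span_row, Submodule.map_span, ← Set.range_comp]
  rfl

end LinearAlgebra

theorem isSelfAdjoint_trace_mul {n R : Type*} [Fintype n] [CommSemiring R] [StarRing R]
    {A B : Matrix n n R} (hA : A.IsHermitian) (hB : B.IsHermitian) :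
    IsSelfAdjoint (A * B).trace := by
  rw [isSelfAdjoint_iff, ← trace_conjTranspose, conjTranspose_mul, hA.eq, hB.eq, trace_mul_comm]

theorem isHermitian_pauli (k : Fin 3) : (pauli k).IsHermitian := by
  ext i j
  fin_cases k <;> fin_cases i <;> fin_cases j <;> simp [pauli]

theorem trace_pauli (k : Fin 3) : (pauli k).trace = 0 := by
  fin_cases k <;> simp [pauli, trace_fin_two]

theorem eq_trace_smul_one_add_sum_pauli (M : Matrix (Fin 2) (Fin 2) ℂ) :
    M = (M.trace / 2) • 1 + ∑ k, ((M * pauli k).trace / 2) • pauli k := by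
  ext i j
  fin_cases i <;> fin_cases j <;>
    simp [pauli, trace_fin_two, mul_apply, Fin.sum_univ_three] <;>
    grind [Complex.I_mul_I]

/-- The Bloch vector `k ↦ ½ Re Tr (M σ_k)` as a real-linear map, defined on all `2 × 2` matrices.
On Hermitian matrices these traces are already real. -/
noncomputable def blochMap : Matrix (Fin 2) (Fin 2) ℂ →ₗ[ℝ] Fin 3 → ℝ where
  toFun M k := (M * pauli k).trace.re / 2
  map_add' A B := by
    ext k
    simp [Matrix.add_mul, add_div]
  map_smul' c A := by
    ext k
    simp [mul_div_assoc]

theorem blochMap_apply (M : Matrix (Fin 2) (Fin 2) ℂ) (k : Fin 3) :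
    blochMap M k = (M * pauli k).trace.re / 2 :=
  rfl

theorem blochMap_one : blochMap 1 = 0 := by
  ext k
  simp [blochMap_apply, trace_pauli]

theorem eq_smul_one_of_blochMap_eq_zero {M : Matrix (Fin 2) (Fin 2) ℂ} (hM : M.IsHermitian)
    (h : blochMap M = 0) : M = (M.trace.re / 2) • (1 : Matrix (Fin 2) (Fin 2) ℂ) := by
  have htrace : (M.trace.re : ℂ) = M.trace := by
    simpa using Complex.conj_eq_iff_re.1 (isSelfAdjoint_trace_mul hM isHermitian_one)
  have hpauli (k : Fin 3) : (M * pauli k).trace = 0 := by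
    have hre : (M * pauli k).trace.re = 0 := by simpa [blochMap_apply] using congrFun h k
    rw [← Complex.conj_eq_iff_re.1 (isSelfAdjoint_trace_mul hM (isHermitian_pauli k)), hre,
      Complex.ofReal_zero]
  calc
    M = (M.trace / 2) • 1 := by
      simpa only [hpauli, zero_div, zero_smul, sum_const_zero, add_zero] using
        eq_trace_smul_one_add_sum_pauli M
    _ = (M.trace.re / 2) • 1 := by
      rw [← Complex.coe_smul, Complex.ofReal_div, htrace, Complex.ofReal_ofNat]

theorem ker_blochMap_inf_selfAdjoint :
    LinearMap.ker blochMap ⊓ selfAdjoint.submodule ℝ (Matrix (Fin 2) (Fin 2) ℂ) =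
      Submodule.span ℝ {1} := by
  apply le_antisymm
  · rintro M ⟨hker, hM⟩
    exact Submodule.mem_span_singleton.2 ⟨_, (eq_smul_one_of_blochMap_eq_zero hM hker).symm⟩
  · rw [Submodule.span_singleton_le_iff_mem]
    exact ⟨blochMap_one, isHermitian_one⟩

theorem stmt9_general {ι : Type*} [Fintype ι] (ρ : ι → Matrix (Fin 2) (Fin 2) ℂ)
    (hρ : ∀ x, (ρ x).IsHermitian) (S : Matrix ι (Fin 3) ℝ)
    (hS : ∀ x k, S x k = (ρ x * pauli k).trace.re / 2) :
    (1 ∈ Submodule.span ℝ (Set.range ρ) →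
      (S * Sᵀ).rank + 1 = Module.finrank ℝ (Submodule.span ℝ (Set.range ρ))) ∧
    (1 ∉ Submodule.span ℝ (Set.range ρ) →
      (S * Sᵀ).rank = Module.finrank ℝ (Submodule.span ℝ (Set.range ρ))) := by
  set p := Submodule.span ℝ (Set.range ρ)
  have hrank : (S * Sᵀ).rank = Module.finrank ℝ (p.map blochMap) := by
    obtain rfl : S = of fun x ↦ blochMap (ρ x) := Matrix.ext hS
    rw [rank_self_mul_transpose, rank_of_linearMap_apply]
  have hle : p ≤ selfAdjoint.submodule ℝ (Matrix (Fin 2) (Fin 2) ℂ) :=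
    Submodule.span_le.2 (Set.range_subset_iff.2 hρ)
  have hker : LinearMap.ker blochMap ⊓ p = Submodule.span ℝ {1} ⊓ p := by
    rw [← ker_blochMap_inf_selfAdjoint, inf_assoc, inf_eq_right.2 hle]
  rw [hrank]
  exact ⟨finrank_map_add_one_of_mem hker one_ne_zero, finrank_map_of_notMem hker⟩

/-- with Q = S Sᵀ and l the dimension of the ℝ-linear span of the
qubit states ρ_0, …, ρ_{m−1} (inside the Hermitian 2×2 matrices, i.e. their real
span in the matrix space), rank Q = l − 1 if the identity lies in the span, and
rank Q = l otherwise. -/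
theorem stmt9 (m : ℕ) (hm : 1 ≤ m)
    (ρ : Fin m → Matrix (Fin 2) (Fin 2) ℂ)
    (hρ : ∀ x, (ρ x).PosSemidef ∧ (ρ x).trace = 1)
    (S : Matrix (Fin m) (Fin 3) ℝ)
    (hS : ∀ x k, S x k = ((ρ x * pauli k).trace).re / 2)
    (Q : Matrix (Fin m) (Fin m) ℝ) (hQ : Q = S * Sᵀ)
    (l : ℕ)
    (hl : l = Module.finrank ℝ (Submodule.span ℝ (Set.range ρ))) :
    ((1 : Matrix (Fin 2) (Fin 2) ℂ) ∈ Submodule.span ℝ (Set.range ρ) → Q.rank = l - 1) ∧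
    ((1 : Matrix (Fin 2) (Fin 2) ℂ) ∉ Submodule.span ℝ (Set.range ρ) → Q.rank = l) := by
  subst hQ hl
  obtain ⟨hmem, hnotMem⟩ := stmt9_general ρ (fun x ↦ (hρ x).1.isHermitian) S hS
  exact ⟨fun h ↦ Nat.eq_sub_of_add_eq (hmem h), hnotMem⟩
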